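/- arXiv:2603.28720 — 8 statements merged into one kernel-verified Lean document; each statement's English description precedes it below -/
import Mathlib

section
/- Let V be a complex vector space and let σ be a conjugate-linear map on V such that σ(σ(v)) = -v for all v ∈ V. Then there exists a module structure of the quaternions ℍ on the additive group of V such that: every real scalar r ∈ ℝ ⊆ ℍ acts by the given real scalar multiplication on V; the quaternion i acts as scalar multiplication by the complex number I; and the quaternion j acts as σ. (This is the paper's claim that a state space carrying an anti-unitary operator with T² = -1 is a representation of the algebra ℂ[ℤ₂ᵀ]^η = ℍ.) -/
/-!
Multiplication by `I` and `σ` are `ℝ`-linear endomorphisms of `V`. They square to `-1`, and they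
anticommute because `σ (I • v) = conj I • σ v = -(I • σ v)`. These are the defining relations of
`ℍ[ℝ]`, so the universal property of the quaternions yields an algebra homomorphism from `ℍ[ℝ]` to
`Module.End ℝ V`.
-/

open scoped Quaternion

open QuaternionAlgebra (Basis)

section RestrictScalars

variable {R A B M N : Type*} [CommSemiring R] [Semiring A] [Algebra R A] [Semiring B] [Algebra R B]
  [AddCommMonoid M] [Module R M] [Module A M] [IsScalarTower R A M]
  [AddCommMonoid N] [Module R N] [Module B N] [IsScalarTower R B N] {φ : A →+* B}

theorem map_smul_of_semilinear (hφ : ∀ r, φ (algebraMap R A r) = algebraMap R B r)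
    (f : M →ₛₗ[φ] N) (r : R) (v : M) : f (r • v) = r • f v := by
  rw [← algebraMap_smul A r v, map_smulₛₗ, hφ, algebraMap_smul]

/-- Restriction of scalars to `R` for a map semilinear over a homomorphism `φ` of `R`-algebras. The
homomorphism is unbundled so that it can be `starRingEnd ℂ`; `LinearMap.restrictScalars` covers
only linear maps. -/
def semilinearRestrictScalars (hφ : ∀ r, φ (algebraMap R A r) = algebraMap R B r)
    (f : M →ₛₗ[φ] N) : M →ₗ[R] N where
  toFun := f
  map_add' := map_add f
  map_smul' := map_smul_of_semilinear hφ f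

end RestrictScalars

section QuaternionBasis

variable {R A M : Type*} [CommRing R] [Ring A] [Algebra R A] [AddCommGroup M] [Module R M]
  [Module A M] [IsScalarTower R A M] {φ : A →+* A} {c₁ c₂ c₃ : R}

/-- The quaternion basis of `Module.End R M` whose first unit is multiplication by a root `a` of
`X² - c₂ X - c₁` that `φ` sends to the conjugate root `c₂ - a`, and whose second unit is a
`φ`-semilinear map of square `c₃`. It makes `M` a module over `ℍ[R,c₁,c₂,c₃]`. -/
def semilinearQuaternionBasis (hφ : ∀ r, φ (algebraMap R A r) = algebraMap R A r)
    {a : A} (ha : a * a = c₁ • (1 : A) + c₂ • a)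
    (hφa : φ a = algebraMap R A c₂ - a) (f : M →ₛₗ[φ] M) (hf : ∀ v, f (f v) = c₃ • v) :
    Basis (Module.End R M) c₁ c₂ c₃ where
  i := Algebra.lsmul R R M a
  j := semilinearRestrictScalars hφ f
  k := Algebra.lsmul R R M a * semilinearRestrictScalars hφ f
  i_mul_i := by rw [← map_mul, ha, map_add, map_smul, map_smul, map_one]
  j_mul_j := LinearMap.ext hf
  i_mul_j := rfl
  j_mul_i := LinearMap.ext fun v =>
    calc
      f (a • v) = (algebraMap R A c₂ - a) • f v := by rw [map_smulₛₗ, hφa]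
      _ = c₂ • f v - a • f v := by rw [sub_smul, algebraMap_smul]

end QuaternionBasis

section LiftHom

variable {R A : Type*} [CommRing R] [Ring A] [Algebra R A] {c₁ c₂ c₃ : R}

theorem liftHom_basis_self_i (b : Basis A c₁ c₂ c₃) : b.liftHom (Basis.self R).i = b.i :=
  congrArg Basis.i (QuaternionAlgebra.lift.symm_apply_apply b)

theorem liftHom_basis_self_j (b : Basis A c₁ c₂ c₃) : b.liftHom (Basis.self R).j = b.j :=
  congrArg Basis.j (QuaternionAlgebra.lift.symm_apply_apply b)

end LiftHom

/-- If `σ` is a conjugate-linear map on a complex vector space `V` with `σ (σ v) = -v`,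
then the additive group of `V` carries a module structure over the quaternions `ℍ`
(encoded as a ring homomorphism `ℍ →+* AddMonoid.End V`) in which every real scalar acts
by the given real scalar multiplication, the quaternion `i` acts as scalar multiplication
by the complex number `I`, and the quaternion `j` acts as `σ`. -/
theorem exists_quaternion_module_of_conjLinear
    (V : Type*) [AddCommGroup V] [Module ℂ V]
    (σ : V →ₛₗ[starRingEnd ℂ] V) (hσ : ∀ v, σ (σ v) = -v) :
    ∃ ρ : ℍ[ℝ] →+* AddMonoid.End V,
      (∀ (r : ℝ) (v : V), ρ (r : ℍ[ℝ]) v = r • v) ∧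
      (∀ v : V, ρ (⟨0, 1, 0, 0⟩ : ℍ[ℝ]) v = Complex.I • v) ∧
      (∀ v : V, ρ (⟨0, 0, 1, 0⟩ : ℍ[ℝ]) v = σ v) := by
  have conj_I : starRingEnd ℂ Complex.I = algebraMap ℝ ℂ 0 - Complex.I := by simp
  have I_mul_I : Complex.I * Complex.I = (-1 : ℝ) • (1 : ℂ) + (0 : ℝ) • Complex.I := by simp
  have σ_sq (v : V) : σ (σ v) = (-1 : ℝ) • v := by rw [hσ, neg_one_smul]
  let b : Basis (Module.End ℝ V) (-1 : ℝ) 0 (-1) :=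
    semilinearQuaternionBasis Complex.conj_ofReal I_mul_I conj_I σ σ_sq
  let ρ : ℍ[ℝ] →ₐ[ℝ] Module.End ℝ V := b.liftHom
  exact ⟨(Module.toAddMonoidEnd (Module.End ℝ V) V).comp ρ,
    fun r => DFunLike.congr_fun (ρ.commutes r),
    DFunLike.congr_fun (liftHom_basis_self_i b),
    DFunLike.congr_fun (liftHom_basis_self_j b)⟩
end

section
/- Let T₀ be the conjugate-linear map on ℂ × ℂ given by T₀(z, w) = (-conj(w), conj(z)). The set C = {f : ℂ × ℂ →ₗ[ℂ] ℂ × ℂ | f ∘ T₀ = T₀ ∘ f} of ℂ-linear endomorphisms of ℂ × ℂ commuting with T₀ is an ℝ-subalgebra of the ℝ-algebra of ℂ-linear endomorphisms of ℂ × ℂ, and C is isomorphic as an ℝ-algebra to the quaternions ℍ. (This is the paper's computation that the endomorphism algebra of the boundary condition of the Haldane chain is the quaternion algebra, i.e., the category of boundary conditions is Vec_ℍ.) -/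
open scoped Quaternion

noncomputable section

/-- The conjugate-linear map `T₀` on `ℂ × ℂ` given by `T₀(z, w) = (-conj w, conj z)`. -/
def T0 : (ℂ × ℂ) →ₛₗ[starRingEnd ℂ] (ℂ × ℂ) where
  toFun p := (-(starRingEnd ℂ) p.2, (starRingEnd ℂ) p.1)
  map_add' := by
    intro a b
    simp [Prod.ext_iff]
    ring
  map_smul' := by
    intro c p
    simp [Prod.ext_iff, smul_eq_mul]

/-! The elements of the commutant with `i = diag(I, -I)` and `j = [[0, -1], [1, 0]]` satisfy the
quaternion relations, so they define a homomorphism from `ℍ` to the commutant, which is injective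
because `ℍ` is a division ring. Conversely, `T₀` sends `(1, 0)` to `(0, 1)`, so an element of the
commutant is determined by its value at `(1, 0)`; hence the commutant has real dimension at most
`dim ℂ² = 4 = dim ℍ`, and the homomorphism is onto. -/

section ConjCommutant

variable {R S M : Type*} [CommSemiring R] [StarRing R] [TrivialStar R]
  [CommSemiring S] [StarRing S] [Algebra R S] [StarModule R S]
  [AddCommMonoid M] [Module R M] [Module S M] [IsScalarTower R S M]

theorem map_smul_of_trivialStar (T : M →ₛₗ[starRingEnd S] M) (r : R) (v : M) :
    T (r • v) = r • T v := by
  rw [← algebraMap_smul S r v, T.map_smulₛₗ, starRingEnd_apply, ← algebraMap_star_comm,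
    star_trivial, algebraMap_smul]

variable (R) in
/-- The commutant of a conjugate-linear map `T`: the `R`-algebra of `S`-linear endomorphisms that
commute with `T`. The scalars `R` play the role of the reals inside `S = ℂ`; being fixed by
conjugation, they are the scalars for which the commutant is a subalgebra. -/
def conjCommutant (T : M →ₛₗ[starRingEnd S] M) : Subalgebra R (Module.End S M) where
  carrier := {f | ∀ v, f (T v) = T (f v)}
  mul_mem' {f g} hf hg v := by rw [Module.End.mul_apply, hg, hf, Module.End.mul_apply]
  add_mem' {f g} hf hg v := by rw [LinearMap.add_apply, hf, hg, LinearMap.add_apply, map_add]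
  algebraMap_mem' r v := by
    rw [Module.algebraMap_end_apply, Module.algebraMap_end_apply, map_smul_of_trivialStar]

/-- Evaluation of the elements of the commutant of `T` at a vector `v`, as an `R`-linear map. -/
def conjCommutantEval (T : M →ₛₗ[starRingEnd S] M) (v : M) : conjCommutant R T →ₗ[R] M where
  toFun f := f.1 v
  map_add' _ _ := rfl
  map_smul' _ _ := rfl

theorem conjCommutantEval_injective {T : M →ₛₗ[starRingEnd S] M} {v : M}
    (hv : Submodule.span S {v, T v} = ⊤) :
    Function.Injective (conjCommutantEval (R := R) T v) := by
  intro f g (hfg : f.1 v = g.1 v)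
  refine Subtype.ext (LinearMap.ext_on hv ?_)
  rintro _ (rfl | rfl)
  · exact hfg
  · rw [f.2, g.2, hfg]

end ConjCommutant

theorem T0_apply (z w : ℂ) : T0 (z, w) = (-starRingEnd ℂ w, starRingEnd ℂ z) :=
  rfl

theorem span_pair_T0_eq_top : Submodule.span ℂ {((1, 0) : ℂ × ℂ), T0 (1, 0)} = ⊤ := by
  refine eq_top_iff.2 fun ⟨z, w⟩ _ => Submodule.mem_span_pair.2 ⟨z, w, ?_⟩
  simp [T0_apply]

/-- The quaternion unit `i` as the endomorphism `(z, w) ↦ (I z, -I w)` of `ℂ × ℂ`. -/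
def quaternionI : Module.End ℂ (ℂ × ℂ) :=
  (Complex.I • LinearMap.id).prodMap (-Complex.I • LinearMap.id)

/-- The quaternion unit `j` as the endomorphism `(z, w) ↦ (-w, z)` of `ℂ × ℂ`. -/
def quaternionJ : Module.End ℂ (ℂ × ℂ) :=
  (-LinearMap.snd ℂ ℂ ℂ).prod (LinearMap.fst ℂ ℂ ℂ)

theorem quaternionI_apply (z w : ℂ) : quaternionI (z, w) = (Complex.I * z, -Complex.I * w) :=
  rfl

theorem quaternionJ_apply (z w : ℂ) : quaternionJ (z, w) = (-w, z) :=
  rfl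

theorem quaternionI_mem_conjCommutant : quaternionI ∈ conjCommutant ℝ T0 := by
  rintro ⟨z, w⟩
  simp [quaternionI_apply, T0_apply]

theorem quaternionJ_mem_conjCommutant : quaternionJ ∈ conjCommutant ℝ T0 := by
  rintro ⟨z, w⟩
  simp [quaternionJ_apply, T0_apply]

theorem quaternionI_mul_self : quaternionI * quaternionI = -1 := by
  refine LinearMap.ext fun ⟨z, w⟩ => ?_
  simp [quaternionI_apply, ← mul_assoc]

theorem quaternionJ_mul_self : quaternionJ * quaternionJ = -1 := by
  refine LinearMap.ext fun ⟨z, w⟩ => ?_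
  simp [quaternionJ_apply]

theorem quaternionJ_mul_quaternionI :
    quaternionJ * quaternionI = -(quaternionI * quaternionJ) := by
  refine LinearMap.ext fun ⟨z, w⟩ => ?_
  simp [quaternionI_apply, quaternionJ_apply]

/-- The quaternion units in the commutant of `T₀`, packaged for the universal property of `ℍ`. -/
def conjCommutantT0Basis : QuaternionAlgebra.Basis (conjCommutant ℝ T0) (-1 : ℝ) 0 (-1) where
  i := ⟨quaternionI, quaternionI_mem_conjCommutant⟩
  j := ⟨quaternionJ, quaternionJ_mem_conjCommutant⟩
  k := ⟨quaternionI * quaternionJ,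
    mul_mem quaternionI_mem_conjCommutant quaternionJ_mem_conjCommutant⟩
  i_mul_i := Subtype.ext <| by simp [quaternionI_mul_self]
  j_mul_j := Subtype.ext <| by simp [quaternionJ_mul_self]
  i_mul_j := rfl
  j_mul_i := Subtype.ext <| by simp [quaternionJ_mul_quaternionI]

/-- The algebra homomorphism `ℍ → conjCommutant ℝ T0` given by the action of `ℍ` on `ℂ × ℂ`. -/
def quaternionToConjCommutant : ℍ[ℝ] →ₐ[ℝ] conjCommutant ℝ T0 :=
  QuaternionAlgebra.lift conjCommutantT0Basis

theorem quaternionToConjCommutant_injective : Function.Injective quaternionToConjCommutant :=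
  quaternionToConjCommutant.toRingHom.injective

theorem quaternionToConjCommutant_surjective : Function.Surjective quaternionToConjCommutant := by
  let eval : conjCommutant ℝ T0 →ₗ[ℝ] ℂ × ℂ := conjCommutantEval T0 (1, 0)
  have eval_injective : Function.Injective eval := conjCommutantEval_injective span_pair_T0_eq_top
  have finrank_eq : Module.finrank ℝ ℍ[ℝ] = Module.finrank ℝ (ℂ × ℂ) := by
    rw [Quaternion.finrank_eq_four, Module.finrank_prod, Complex.finrank_real_complex]
  have comp_surjective : Function.Surjective (eval ∘ quaternionToConjCommutant) :=
    (LinearMap.injective_iff_surjective_of_finrank_eq_finrank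
      (f := eval ∘ₗ quaternionToConjCommutant.toLinearMap) finrank_eq).1
      (eval_injective.comp quaternionToConjCommutant_injective)
  exact comp_surjective.of_comp_left eval_injective

/-- The set of `ℂ`-linear endomorphisms of `ℂ × ℂ` commuting with `T₀` is an
`ℝ`-subalgebra of the `ℝ`-algebra of `ℂ`-linear endomorphisms of `ℂ × ℂ`, and this
subalgebra is isomorphic as an `ℝ`-algebra to the quaternions `ℍ`. -/
theorem commutant_of_T0_iso_quaternions :
    ∃ C : Subalgebra ℝ (Module.End ℂ (ℂ × ℂ)),
      (↑C = {f : Module.End ℂ (ℂ × ℂ) | ∀ p, f (T0 p) = T0 (f p)}) ∧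
      Nonempty (C ≃ₐ[ℝ] ℍ[ℝ]) :=
  ⟨conjCommutant ℝ T0, rfl,
    ⟨(AlgEquiv.ofBijective quaternionToConjCommutant
      ⟨quaternionToConjCommutant_injective, quaternionToConjCommutant_surjective⟩).symm⟩⟩

end
end

section
/- Let V be a nonzero finite-dimensional complex vector space and let τ be a conjugate-linear map on V such that applying τ four times is the identity. Assume the pair (V, τ) is irreducible: the only ℂ-linear subspaces W ⊆ V with τ(W) ⊆ W are 0 and V. Then one of the following holds: either there is a ℂ-linear isomorphism e : V ≅ ℂ with e(τ(v)) = conj(e(v)) for all v ∈ V, or there is a ℂ-linear isomorphism e : V ≅ ℂ × ℂ with e(τ(v)) = T₀(e(v)) for all v ∈ V. (Classification of irreducible representations of ℤ₄ᵀ: up to equivalence there are exactly the trivial representation and the two-dimensional quaternionic representation Q.) -/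
noncomputable section

/-!
Irreducibility applied to the invariant subspace `{v | τ² v = v}`, which contains every
`τ² v + v`, forces `τ² = 1` or `τ² = -1`. If `τ² = 1`, averaging produces a nonzero fixed vector,
and it spans `V`. If `τ² = -1`, then `v` and `τ v` are independent for every `v ≠ 0`, since
`τ v = c • v` would give `conj c * c = -1` (Kramers degeneracy), and they span `V`.
-/

section Irreducible

variable {R M V : Type*} [Semiring R] [AddCommMonoid M] [Module R M] [AddCommMonoid V] [Module R V]
  {σ : R →+* R}

/-- A semilinear map is irreducible if its only invariant submodules are `0` and the whole module.
Maps on the zero module count as irreducible. -/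
def IsIrreducibleMap (τ : V →ₛₗ[σ] V) : Prop :=
  ∀ W : Submodule R V, (∀ v ∈ W, τ v ∈ W) → W = ⊥ ∨ W = ⊤

theorem IsIrreducibleMap.exists_linearEquiv_of_injective [Nontrivial M] {τ : V →ₛₗ[σ] V}
    (hirr : IsIrreducibleMap τ) {S : M → M} {f : M →ₗ[R] V} (hf : Function.Injective f)
    (hfS : ∀ m, τ (f m) = f (S m)) :
    ∃ e : V ≃ₗ[R] M, ∀ v, e (τ v) = S (e v) := by
  have range_invariant : ∀ v ∈ f.range, τ v ∈ f.range := by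
    rintro _ ⟨m, rfl⟩
    exact ⟨S m, (hfS m).symm⟩
  have range_ne_bot : f.range ≠ ⊥ := fun h ↦ by
    obtain ⟨m, hm⟩ := exists_ne (0 : M)
    exact hm (hf (by rw [LinearMap.range_eq_bot.mp h, LinearMap.zero_apply, LinearMap.zero_apply]))
  have hsurj : Function.Surjective f :=
    LinearMap.range_eq_top.mp ((hirr f.range range_invariant).resolve_left range_ne_bot)
  let g : M ≃ₗ[R] V := LinearEquiv.ofBijective f ⟨hf, hsurj⟩
  refine ⟨g.symm, fun v ↦ g.symm_apply_eq.mpr ?_⟩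
  calc τ v = τ (f (g.symm v)) := congrArg τ (g.apply_symm_apply v).symm
    _ = g (S (g.symm v)) := hfS (g.symm v)

end Irreducible

theorem IsIrreducibleMap.sq_eq_id_or_sq_eq_neg {R V : Type*} [Ring R] [AddCommGroup V] [Module R V]
    {σ : R →+* R} [RingHomInvPair σ σ] {τ : V →ₛₗ[σ] V} (hirr : IsIrreducibleMap τ)
    (hτ : ∀ v, τ (τ (τ (τ v))) = v) :
    (∀ v, τ (τ v) = v) ∨ ∀ v, τ (τ v) = -v := by
  let W : Submodule R V := LinearMap.eqLocus (τ.comp τ) LinearMap.id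
  have mem_W (v : V) : v ∈ W ↔ τ (τ v) = v := Iff.rfl
  rcases hirr W fun v hv ↦ congrArg τ hv with hW | hW
  · refine Or.inr fun v ↦ eq_neg_of_add_eq_zero_left ?_
    have sum_mem : τ (τ v) + v ∈ W := by
      rw [mem_W, map_add, map_add, hτ, add_comm]
    rwa [hW, Submodule.mem_bot] at sum_mem
  · exact Or.inl fun v ↦ (mem_W v).mp (hW ▸ Submodule.mem_top)

section DivisionRing

variable {K V : Type*} [DivisionRing K] [AddCommGroup V] [Module K V] {σ : K →+* K}
  {τ : V →ₛₗ[σ] V}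

theorem exists_ne_zero_map_eq_self [RingHomInvPair σ σ] [Nontrivial V] (hσ : σ ≠ RingHom.id K)
    (hτ : ∀ v, τ (τ v) = v) : ∃ u, u ≠ 0 ∧ τ u = u := by
  obtain ⟨v, hv⟩ := exists_ne (0 : V)
  by_cases hsum : v + τ v = 0
  · -- `c - σ c` plays the role of the imaginary unit: it turns `τ v = -v` into a fixed vector.
    obtain ⟨c, hc⟩ : ∃ c, σ c ≠ c := by
      contrapose! hσ
      exact RingHom.ext hσ
    refine ⟨(c - σ c) • v, smul_ne_zero (sub_ne_zero.mpr hc.symm) hv, ?_⟩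
    rw [map_smulₛₗ, map_sub, RingHomInvPair.comp_apply_eq, eq_neg_of_add_eq_zero_right hsum,
      smul_neg, ← neg_smul, neg_sub]
  · exact ⟨v + τ v, hsum, by rw [map_add, hτ, add_comm]⟩

theorem linearIndependent_pair_of_sq_eq_neg (hσ : ∀ a, σ a * a ≠ -1) {v : V} (hv : v ≠ 0)
    (hτv : τ (τ v) = -v) : LinearIndependent K ![v, τ v] := by
  refine (LinearIndependent.pair_iff' hv).mpr fun c hc ↦ hσ c (smul_left_injective K hv ?_)
  calc (σ c * c) • v = σ c • τ v := by rw [mul_smul, hc]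
    _ = τ (τ v) := by rw [← map_smulₛₗ, hc]
    _ = (-1 : K) • v := by rw [hτv, neg_one_smul]

theorem IsIrreducibleMap.exists_linearEquiv_of_sq_eq_id [RingHomInvPair σ σ] [Nontrivial V]
    (hirr : IsIrreducibleMap τ) (hσ : σ ≠ RingHom.id K) (hτ : ∀ v, τ (τ v) = v) :
    ∃ e : V ≃ₗ[K] K, ∀ v, e (τ v) = σ (e v) := by
  obtain ⟨u, hu, hτu⟩ := exists_ne_zero_map_eq_self hσ hτ
  refine hirr.exists_linearEquiv_of_injective (f := LinearMap.toSpanSingleton K V u)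
    (smul_left_injective K hu) fun m ↦ ?_
  simp only [LinearMap.toSpanSingleton_apply, map_smulₛₗ, hτu]

theorem IsIrreducibleMap.exists_linearEquiv_prod_of_sq_eq_neg [Nontrivial V]
    (hirr : IsIrreducibleMap τ) (hσ : ∀ a, σ a * a ≠ -1) (hτ : ∀ v, τ (τ v) = -v) :
    ∃ e : V ≃ₗ[K] K × K, ∀ v, e (τ v) = (-σ (e v).2, σ (e v).1) := by
  obtain ⟨v, hv⟩ := exists_ne (0 : V)
  let f : K × K →ₗ[K] V :=
    (LinearMap.toSpanSingleton K V v).coprod (LinearMap.toSpanSingleton K V (τ v))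
  have f_apply (p : K × K) : f p = p.1 • v + p.2 • τ v := rfl
  have f_injective : Function.Injective f := (injective_iff_map_eq_zero f).mpr fun p hp ↦
    Prod.ext_iff.mpr <| LinearIndependent.pair_iff.mp
      (linearIndependent_pair_of_sq_eq_neg hσ hv (hτ v)) p.1 p.2 hp
  refine hirr.exists_linearEquiv_of_injective (S := fun p ↦ (-σ p.2, σ p.1)) f_injective fun p ↦ ?_
  simp only [f_apply, map_add, map_smulₛₗ, hτ, smul_neg, neg_smul, add_comm]

theorem irreducible_Z4T_classification_general [RingHomInvPair σ σ] [Nontrivial V]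
    (hσ_ne : σ ≠ RingHom.id K) (hσ_norm : ∀ a, σ a * a ≠ -1)
    (hτ : ∀ v, τ (τ (τ (τ v))) = v) (hirr : IsIrreducibleMap τ) :
    (∃ e : V ≃ₗ[K] K, ∀ v, e (τ v) = σ (e v)) ∨
    (∃ e : V ≃ₗ[K] K × K, ∀ v, e (τ v) = (-σ (e v).2, σ (e v).1)) :=
  (hirr.sq_eq_id_or_sq_eq_neg hτ).imp
    (hirr.exists_linearEquiv_of_sq_eq_id hσ_ne)
    (hirr.exists_linearEquiv_prod_of_sq_eq_neg hσ_norm)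

end DivisionRing

theorem starRingEnd_complex_ne_id : starRingEnd ℂ ≠ RingHom.id ℂ := fun h ↦ by
  have conj_I_eq : (starRingEnd ℂ) Complex.I = Complex.I := RingHom.congr_fun h Complex.I
  exact Complex.I_ne_zero (self_eq_neg.mp (conj_I_eq.symm.trans Complex.conj_I))

theorem conj_mul_self_ne_neg_one {𝕜 : Type*} [RCLike 𝕜] (a : 𝕜) : (starRingEnd 𝕜) a * a ≠ -1 := by
  intro h
  rw [RCLike.conj_mul] at h
  have norm_sq_eq : ‖a‖ ^ 2 = -1 := by exact_mod_cast h
  linarith [sq_nonneg ‖a‖]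

/-- Classification of irreducible representations of `ℤ₄ᵀ`: a nonzero finite-dimensional
complex vector space `V` with a conjugate-linear map `τ` satisfying `τ⁴ = id`, which is
irreducible (the only `τ`-invariant `ℂ`-subspaces are `0` and `V`), is equivalent either
to `ℂ` with `τ` acting as complex conjugation, or to `ℂ × ℂ` with `τ` acting as `T₀`. -/
theorem irreducible_Z4T_classification
    (V : Type*) [AddCommGroup V] [Module ℂ V] [FiniteDimensional ℂ V] [Nontrivial V]
    (τ : V →ₛₗ[starRingEnd ℂ] V) (hτ : ∀ v, τ (τ (τ (τ v))) = v)
    (hirr : ∀ W : Submodule ℂ V, (∀ v ∈ W, τ v ∈ W) → W = ⊥ ∨ W = ⊤) :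
    (∃ e : V ≃ₗ[ℂ] ℂ, ∀ v, e (τ v) = (starRingEnd ℂ) (e v)) ∨
    (∃ e : V ≃ₗ[ℂ] (ℂ × ℂ), ∀ v, e (τ v) = T0 (e v)) :=
  irreducible_Z4T_classification_general starRingEnd_complex_ne_id conj_mul_self_ne_neg_one hτ hirr

end
end

section
/- Let A be an associative unital ℝ-algebra, φ : ℂ → A a unital ℝ-algebra homomorphism, and u ∈ A an element with u * u * u * u = -1 and φ(z) * u = u * φ(conj(z)) for all z ∈ ℂ. Assume that the ℝ-linear map ℂ × ℂ × ℂ × ℂ → A given by (z₀, z₁, z₂, z₃) ↦ φ(z₀) + φ(z₁) * u + φ(z₂) * u² + φ(z₃) * u³ is bijective. Then A is isomorphic as an ℝ-algebra to the algebra of 2 × 2 matrices over ℂ. (The paper's computation that the twisted group algebra ℂ[ℤ₄ᵀ]^ψ, whose module category defines the nontrivial ℤ₄ᵀ-SPT phase, is Mat₂(ℂ); its center is ℝ[u²] ≅ ℂ.) -/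
/-!
The element `u ^ 2` squares to `-1` and commutes with both `φ I` and `u`, so `A` is an algebra over
the central subfield `ℝ[u ^ 2] ≅ ℂ`. Over it, `A` is generated by the anticommuting elements `φ I`
and `u`, whose squares are the scalars `-1 = I ^ 2` and `I`. Hence `A` is a nonzero quotient of the
quaternion algebra `(I ^ 2, I)` over `ℂ`, which is split because `I ^ 2` is a square, and the simple
ring of `2 × 2` matrices has no nonzero quotient besides itself.
-/

open Algebra (adjoin subset_adjoin adjoin_mono adjoin_le)
open scoped Quaternion

section SplitQuaternion

variable {R : Type*} [CommRing R]

/-- The quaternion basis `i, j, i * j` of type `(a, b)` formed by two anticommuting elements with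
squares `a` and `b`; in `ℍ[R,a,0,b]` the parameter `0` is the linear coefficient in
`i ^ 2 = a + 0 * i`. -/
@[simps]
def anticommutingBasis {A : Type*} [Ring A] [Algebra R A] {a b : R} (i j : A)
    (hi : i * i = algebraMap R A a) (hj : j * j = algebraMap R A b) (hij : i * j = -(j * i)) :
    QuaternionAlgebra.Basis A a 0 b where
  i := i
  j := j
  k := i * j
  i_mul_i := by simp [hi, Algebra.algebraMap_eq_smul_one]
  j_mul_j := by rw [hj, Algebra.algebraMap_eq_smul_one]
  i_mul_j := rfl
  j_mul_i := by simp [hij]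

/-- The representation of `ℍ[R,r ^ 2,0,b]` on `R²` witnessing that this algebra is split: `i` acts
on the coordinate axes by the square roots `r` and `-r` of `i ^ 2`, and `j` maps each axis into the
other. -/
def splitQuaternionBasis (r b : R) :
    QuaternionAlgebra.Basis (Matrix (Fin 2) (Fin 2) R) (r ^ 2) 0 b :=
  anticommutingBasis !![r, 0; 0, -r] !![0, 1; b, 0]
    (by ext x y; fin_cases x <;> fin_cases y <;> simp [Matrix.algebraMap_matrix_apply, sq])
    (by ext x y; fin_cases x <;> fin_cases y <;> simp [Matrix.algebraMap_matrix_apply])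
    (by ext x y; fin_cases x <;> fin_cases y <;> simp [mul_comm])

theorem splitQuaternionBasis_liftHom_apply (r b : R) (x : ℍ[R,r ^ 2,0,b]) :
    (splitQuaternionBasis r b).liftHom x =
      !![x.re + x.imI * r, x.imJ + x.imK * r;
        b * (x.imJ - x.imK * r), x.re - x.imI * r] := by
  ext s t
  fin_cases s <;> fin_cases t <;>
    simp [splitQuaternionBasis, QuaternionAlgebra.Basis.lift, Matrix.algebraMap_matrix_apply] <;>
    ring

theorem eq_zero_of_add_mul_eq_zero_of_sub_mul_eq_zero [NoZeroDivisors R] [NeZero (2 : R)]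
    {r p q : R} (hr : r ≠ 0) (hadd : p + q * r = 0) (hsub : p - q * r = 0) : p = 0 ∧ q = 0 := by
  have hp : 2 * p = 0 := by linear_combination hadd + hsub
  have hq : 2 * (q * r) = 0 := by linear_combination hadd - hsub
  exact ⟨by simpa [two_ne_zero] using hp, by simpa [two_ne_zero, hr] using hq⟩

theorem splitQuaternionBasis_liftHom_injective [NoZeroDivisors R] [NeZero (2 : R)]
    {r b : R} (hr : r ≠ 0) (hb : b ≠ 0) :
    Function.Injective (splitQuaternionBasis r b).liftHom := by
  rw [injective_iff_map_eq_zero]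
  intro x hx
  rw [splitQuaternionBasis_liftHom_apply] at hx
  have entry (s t : Fin 2) := congrFun₂ hx s t
  obtain ⟨hre, himI⟩ := eq_zero_of_add_mul_eq_zero_of_sub_mul_eq_zero hr (entry 0 0) (entry 1 1)
  obtain ⟨himJ, himK⟩ := eq_zero_of_add_mul_eq_zero_of_sub_mul_eq_zero hr (entry 0 1)
    ((mul_eq_zero.mp (entry 1 0)).resolve_left hb)
  ext <;> assumption

variable {K : Type*} [Field K]

theorem splitQuaternionBasis_liftHom_bijective [NeZero (2 : K)] {r b : K} (hr : r ≠ 0)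
    (hb : b ≠ 0) : Function.Bijective (splitQuaternionBasis r b).liftHom := by
  have hinj := splitQuaternionBasis_liftHom_injective hr hb
  have hdim : Module.finrank K ℍ[K,r ^ 2,0,b] = Module.finrank K (Matrix (Fin 2) (Fin 2) K) := by
    simp [QuaternionAlgebra.finrank_eq_four, Module.finrank_matrix]
  exact ⟨hinj, (LinearMap.injective_iff_surjective_of_finrank_eq_finrank
    (f := (splitQuaternionBasis r b).liftHom.toLinearMap) hdim).mp hinj⟩

theorem nonempty_algEquiv_matrix_of_anticommute [NeZero (2 : K)] {A : Type*} [Ring A]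
    [Nontrivial A] [Algebra K A] {r b : K} (hr : r ≠ 0) (hb : b ≠ 0) {i j : A}
    (hi : i * i = algebraMap K A (r ^ 2)) (hj : j * j = algebraMap K A b)
    (hij : i * j = -(j * i)) (hgen : adjoin K {i, j} = ⊤) :
    Nonempty (A ≃ₐ[K] Matrix (Fin 2) (Fin 2) K) := by
  let f := (anticommutingBasis i j hi hj hij).liftHom
  have hsurj : Function.Surjective f := by
    rw [← AlgHom.range_eq_top, QuaternionAlgebra.Basis.range_liftHom, eq_top_iff, ← hgen]
    exact adjoin_mono (by simp [Set.insert_subset_iff])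
  let e := AlgEquiv.ofBijective _ (splitQuaternionBasis_liftHom_bijective hr hb)
  let g : Matrix (Fin 2) (Fin 2) K →ₐ[K] A := f.comp e.symm.toAlgHom
  have hg : Function.Bijective g := ⟨g.toRingHom.injective, hsurj.comp e.symm.surjective⟩
  exact ⟨(AlgEquiv.ofBijective g hg).symm⟩

end SplitQuaternion

theorem commute_mul_self_of_anticommute {M : Type*} [Semigroup M] [HasDistribNeg M] {a b : M}
    (h : a * b = -(b * a)) : Commute (b * b) a := by
  rw [commute_iff_eq, ← mul_assoc a, h, neg_mul, mul_assoc b a, h, mul_neg, neg_neg, mul_assoc]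

theorem adjoin_eq_top_of_isScalarTower (R : Type*) {S A : Type*} [CommSemiring R] [CommSemiring S]
    [Semiring A] [Algebra R S] [Algebra R A] [Algebra S A] [IsScalarTower R S A] {s : Set A}
    (hs : adjoin R s = ⊤) : adjoin S s = ⊤ := by
  have hle : adjoin R s ≤ (adjoin S s).restrictScalars R := adjoin_le subset_adjoin
  exact Algebra.eq_top_iff.mpr fun x => hle (hs ▸ Algebra.mem_top)

theorem algHom_complex_range_eq_adjoin {A : Type*} [Semiring A] [Algebra ℝ A] (φ : ℂ →ₐ[ℝ] A) :
    φ.range = adjoin ℝ {φ Complex.I} := by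
  rw [← Algebra.map_top, ← Complex.adjoin_I, AlgHom.map_adjoin, Set.image_singleton]

theorem nonempty_algEquiv_matrix_complex_of_anticommute {A : Type*} [Ring A] [Nontrivial A]
    [Algebra ℝ A] {i u : A} (hi : i * i = -1) (hu : u ^ 4 = -1) (hiu : i * u = -(u * i))
    (hgen : adjoin ℝ {i, u} = ⊤) : Nonempty (A ≃ₐ[ℝ] Matrix (Fin 2) (Fin 2) ℂ) := by
  have hcentral (x : A) : Commute (u * u) x := by
    refine Algebra.commute_of_mem_adjoin_of_forall_mem_commute (R := ℝ) (s := {i, u})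
      (hgen ▸ Algebra.mem_top) ?_
    rintro y (rfl | rfl)
    · exact commute_mul_self_of_anticommute hiu
    · exact (Commute.refl y).mul_left (Commute.refl y)
  let c : ℂ →ₐ[ℝ] A := Complex.liftAux (u * u) (by rw [← hu]; noncomm_ring)
  have hc (z : ℂ) (x : A) : Commute (c z) x :=
    (Algebra.commute_algebraMap_left z.re x).add_left ((hcentral x).smul_left z.im)
  let : Algebra ℂ A := c.toRingHom.toAlgebra' hc
  have : IsScalarTower ℝ ℂ A := .of_algebraMap_eq' c.comp_algebraMap.symm
  obtain ⟨e⟩ := nonempty_algEquiv_matrix_of_anticommute (K := ℂ) Complex.I_ne_zero Complex.I_ne_zero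
    (by simp [hi]) (Complex.liftAux_apply_I (u * u) _).symm hiu
    (adjoin_eq_top_of_isScalarTower ℝ hgen)
  exact ⟨e.restrictScalars ℝ⟩

theorem twisted_group_algebra_Z4T_iso_matrices_general
    (A : Type*) [Ring A] [Algebra ℝ A] [Nontrivial A]
    (φ : ℂ →ₐ[ℝ] A) (u : A) (hu : u * u * u * u = -1)
    (hcomm : ∀ z : ℂ, φ z * u = u * φ ((starRingEnd ℂ) z))
    (hsurj : Function.Surjective (fun p : ℂ × ℂ × ℂ × ℂ =>
      φ p.1 + φ p.2.1 * u + φ p.2.2.1 * u ^ 2 + φ p.2.2.2 * u ^ 3)) :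
    Nonempty (A ≃ₐ[ℝ] Matrix (Fin 2) (Fin 2) ℂ) := by
  have hI : φ Complex.I * φ Complex.I = -1 := by rw [← map_mul, Complex.I_mul_I, map_neg, map_one]
  have hIu : φ Complex.I * u = -(u * φ Complex.I) := by simp [hcomm]
  have hgen : adjoin ℝ {φ Complex.I, u} = ⊤ := by
    have hφ (z : ℂ) : φ z ∈ adjoin ℝ {φ Complex.I, u} := by
      have hz : φ z ∈ adjoin ℝ {φ Complex.I} := algHom_complex_range_eq_adjoin φ ▸ ⟨z, rfl⟩
      exact adjoin_mono (by simp) hz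
    have hu_mem : u ∈ adjoin ℝ {φ Complex.I, u} := subset_adjoin (by simp)
    refine Algebra.eq_top_iff.mpr fun x => ?_
    obtain ⟨p, rfl⟩ := hsurj x
    exact add_mem (add_mem (add_mem (hφ _) (mul_mem (hφ _) hu_mem))
      (mul_mem (hφ _) (pow_mem hu_mem 2))) (mul_mem (hφ _) (pow_mem hu_mem 3))
  exact nonempty_algEquiv_matrix_complex_of_anticommute hI (by simpa [pow_succ] using hu) hIu hgen

/-- The twisted group algebra `ℂ[ℤ₄ᵀ]^ψ` is `Mat₂(ℂ)`: if `A` is an associative unital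
`ℝ`-algebra containing `ℂ` (via `φ`) and an element `u` with `u⁴ = -1` and
`φ z * u = u * φ (conj z)`, such that
`(z₀, z₁, z₂, z₃) ↦ φ z₀ + φ z₁ * u + φ z₂ * u² + φ z₃ * u³` is bijective, then `A` is
isomorphic as an `ℝ`-algebra to the `2 × 2` complex matrices. -/
theorem twisted_group_algebra_Z4T_iso_matrices
    (A : Type*) [Ring A] [Algebra ℝ A]
    (φ : ℂ →ₐ[ℝ] A) (u : A) (hu : u * u * u * u = -1)
    (hcomm : ∀ z : ℂ, φ z * u = u * φ ((starRingEnd ℂ) z))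
    (hbij : Function.Bijective (fun p : ℂ × ℂ × ℂ × ℂ =>
      φ p.1 + φ p.2.1 * u + φ p.2.2.1 * u ^ 2 + φ p.2.2.2 * u ^ 3)) :
    Nonempty (A ≃ₐ[ℝ] Matrix (Fin 2) (Fin 2) ℂ) := by
  have : Nontrivial A := hbij.injective.nontrivial
  exact twisted_group_algebra_Z4T_iso_matrices_general A φ u hu hcomm hbij.surjective
end

section
/- Let A be an associative unital ℝ-algebra, φ : ℂ → A a unital ℝ-algebra homomorphism, and r, t ∈ A elements satisfying: r * r * r = 1, t * t = -1, t * r = r * r * t, φ(z) * r = r * φ(z) for all z ∈ ℂ, and φ(z) * t = t * φ(conj(z)) for all z ∈ ℂ. Assume that the ℝ-linear map ℂ⁶ → A given by (z₀, …, z₅) ↦ φ(z₀) + φ(z₁) * r + φ(z₂) * r² + φ(z₃) * t + φ(z₄) * r * t + φ(z₅) * r² * t is bijective. Then A is isomorphic as an ℝ-algebra to ℍ × ℍ × ℍ. (The paper's computation that the twisted group algebra ℂ[S₃ᵀ]^ψ of the anti-linear group S₃ᵀ = ℤ₃ ⋊ ℤ₂ᵀ, which defines the nontrivial S₃ᵀ-SPT,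 decomposes as three copies of the quaternion algebra.) -/
open scoped Quaternion

/-!
Since `φ` and the powers of `r` commute, they span a copy of the group algebra `ℂ[ℤ₃]`, which the
characters `χ` of `ℤ₃` split into three orthogonal idempotents. Conjugation by `t` inverts `r` and
conjugates scalars; as `conj (χ g) = χ (-g)`, these two effects cancel on each idempotent, so the
idempotents are central. The elements `φ I` and `t` generate a copy of `ℍ`, and on each of the three
corners `r` acts as the complex scalar `χ 1`, so each corner is a copy of `ℍ`.
-/

section Gluing

variable {R ι A B : Type*} [CommRing R] [Fintype ι] [Ring A] [Algebra R A]
  {e : ι → A}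

/-- The algebra homomorphism `b ↦ ∑ i, e i * ψ (b i)` out of a power of `B` that uses `ψ` on each
of the corners cut out by complete orthogonal idempotents `e i` commuting with the image of `ψ`. -/
def glueAlgHom [Ring B] [Algebra R B] (he : CompleteOrthogonalIdempotents e) (ψ : B →ₐ[R] A)
    (hcomm : ∀ i b, Commute (e i) (ψ b)) : (ι → B) →ₐ[R] A :=
  AlgHom.ofLinearMap (∑ i, (LinearMap.mulLeft R (e i)).comp (ψ.toLinearMap.comp (LinearMap.proj i)))
    (by simp [he.complete])
    (fun b c ↦ by
      classical
      have corner_mul (i j : ι) : e i * ψ (b i) * (e j * ψ (c j)) =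
          if i = j then e i * ψ (b i * c i) else 0 := by
        rw [← (hcomm j _).mul_mul_mul_comm, he.mul_eq]
        split_ifs with hij
        · rw [hij, map_mul]
        · rw [zero_mul]
      simp [Finset.sum_mul_sum, corner_mul])

section Ring

variable [Ring B] [Algebra R B] (he : CompleteOrthogonalIdempotents e) (ψ : B →ₐ[R] A)
  (hcomm : ∀ i b, Commute (e i) (ψ b))

lemma glueAlgHom_apply (b : ι → B) : glueAlgHom he ψ hcomm b = ∑ i, e i * ψ (b i) := by
  simp [glueAlgHom]

lemma range_le_range_glueAlgHom : ψ.range ≤ (glueAlgHom he ψ hcomm).range := by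
  rintro _ ⟨b, rfl⟩
  refine ⟨fun _ ↦ b, ?_⟩
  change glueAlgHom he ψ hcomm (fun _ ↦ b) = ψ b
  rw [glueAlgHom_apply, ← Finset.sum_mul, he.complete, one_mul]

lemma idempotent_mul_glueAlgHom (b : ι → B) (i : ι) :
    e i * glueAlgHom he ψ hcomm b = e i * ψ (b i) := by
  classical
  simp [glueAlgHom_apply, Finset.mul_sum, ← mul_assoc, he.mul_eq]

end Ring

lemma glueAlgHom_injective [DivisionRing B] [Algebra R B] (he : CompleteOrthogonalIdempotents e)
    (ψ : B →ₐ[R] A) (hcomm : ∀ i b, Commute (e i) (ψ b)) (hne : ∀ i, e i ≠ 0) :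
    Function.Injective (glueAlgHom he ψ hcomm) := by
  rw [injective_iff_map_eq_zero]
  intro b hb
  funext i
  by_contra hbi
  have corner_eq_zero : e i * ψ (b i) = 0 := by
    rw [← idempotent_mul_glueAlgHom he ψ hcomm, hb, mul_zero]
  apply hne i
  calc e i = e i * ψ (b i) * ψ (b i)⁻¹ := by
        rw [mul_assoc, ← map_mul, mul_inv_cancel₀ hbi, map_one, mul_one]
    _ = 0 := by rw [corner_eq_zero, zero_mul]

end Gluing

section CharIdempotent

variable {G A : Type*} [AddCommGroup G] [Fintype G] [Ring A]

/-- The idempotent `(1 / |G|) ∑ g, χ(-g) ρ(g)` projecting a representation `ρ` of the finite abelian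
group `G` onto its `χ`-isotypic part, with complex scalars acting through `φ`. -/
noncomputable def charIdempotent (φ : ℂ →+* A) (ρ : AddChar G A) (χ : AddChar G ℂ) : A :=
  ∑ g, φ ((Fintype.card G : ℂ)⁻¹ * χ (-g)) * ρ g

variable (φ : ℂ →+* A) (ρ : AddChar G A)

lemma sum_charIdempotent : ∑ χ, charIdempotent φ ρ χ = 1 := by
  classical
  simp only [charIdempotent]
  rw [Finset.sum_comm]
  calc ∑ g, ∑ χ : AddChar G ℂ, φ ((Fintype.card G : ℂ)⁻¹ * χ (-g)) * ρ g
      = ∑ g, φ (if g = 0 then 1 else 0) * ρ g := by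
        refine Finset.sum_congr rfl fun g _ ↦ ?_
        rw [← Finset.sum_mul, ← map_sum, ← Finset.mul_sum, AddChar.sum_apply_eq_ite]
        simp
    _ = 1 := by simp [apply_ite φ]

lemma charIdempotent_ne_zero
    (hinj : Function.Injective fun z : G → ℂ ↦ ∑ g, φ (z g) * ρ g) (χ : AddChar G ℂ) :
    charIdempotent φ ρ χ ≠ 0 := by
  intro hχ
  have coeff_eq_zero : (fun g ↦ (Fintype.card G : ℂ)⁻¹ * χ (-g)) = 0 :=
    hinj (hχ.trans (by simp))
  simpa using congrFun coeff_eq_zero 0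

variable {φ ρ}

lemma commute_charIdempotent (hφρ : ∀ z g, Commute (φ z) (ρ g)) (z : ℂ) (χ : AddChar G ℂ) :
    Commute (φ z) (charIdempotent φ ρ χ) :=
  Commute.sum_right _ _ _ fun g _ ↦ ((Commute.all z _).map φ).mul_right (hφρ z g)

lemma apply_mul_charIdempotent (hφρ : ∀ z g, Commute (φ z) (ρ g)) (h : G) (χ : AddChar G ℂ) :
    ρ h * charIdempotent φ ρ χ = φ (χ h) * charIdempotent φ ρ χ := by
  simp only [charIdempotent, Finset.mul_sum]
  refine Fintype.sum_equiv (Equiv.addLeft h) _ _ fun g ↦ ?_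
  have scalar : χ (-g) = χ h * χ (-(h + g)) := by
    rw [← AddChar.map_add_eq_mul, neg_add, add_neg_cancel_left]
  rw [Equiv.coe_addLeft, ← mul_assoc, ← (hφρ _ _).eq, mul_assoc, ← AddChar.map_add_eq_mul,
    ← mul_assoc, ← map_mul, scalar, mul_left_comm]

lemma charIdempotent_mul_of_ne (hφρ : ∀ z g, Commute (φ z) (ρ g)) {χ χ' : AddChar G ℂ}
    (hne : χ ≠ χ') : charIdempotent φ ρ χ * charIdempotent φ ρ χ' = 0 := by
  have orthogonality : ∑ g, (χ' - χ) g = 0 :=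
    AddChar.sum_eq_zero_iff_ne_zero.2 (sub_ne_zero.2 hne.symm)
  calc charIdempotent φ ρ χ * charIdempotent φ ρ χ'
      = ∑ g, φ ((Fintype.card G : ℂ)⁻¹ * (χ' - χ) g) * charIdempotent φ ρ χ' := by
        rw [charIdempotent, Finset.sum_mul]
        refine Finset.sum_congr rfl fun g _ ↦ ?_
        rw [mul_assoc, apply_mul_charIdempotent hφρ, ← mul_assoc, ← map_mul, mul_assoc,
          AddChar.sub_apply, mul_comm (χ' g)]
    _ = 0 := by
        rw [← Finset.sum_mul, ← map_sum, ← Finset.mul_sum, orthogonality, mul_zero, map_zero,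
          zero_mul]

lemma completeOrthogonalIdempotents_charIdempotent (hφρ : ∀ z g, Commute (φ z) (ρ g)) :
    CompleteOrthogonalIdempotents (charIdempotent φ ρ) :=
  CompleteOrthogonalIdempotents.iff_ortho_complete.2
    ⟨fun _ _ hne ↦ charIdempotent_mul_of_ne hφρ hne, sum_charIdempotent φ ρ⟩

lemma apply_mem_range_glueAlgHom {R B : Type*} [CommRing R] [Ring B] [Algebra R A] [Algebra R B]
    (hφρ : ∀ z g, Commute (φ z) (ρ g)) (ψ : B →ₐ[R] A)
    (hcomm : ∀ χ b, Commute (charIdempotent φ ρ χ) (ψ b)) (hφψ : ∀ z, φ z ∈ ψ.range) (g : G) :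
    ρ g ∈ (glueAlgHom (completeOrthogonalIdempotents_charIdempotent hφρ) ψ hcomm).range := by
  choose b hb using hφψ
  refine ⟨fun χ ↦ b (χ g), ?_⟩
  calc glueAlgHom _ ψ hcomm (fun χ ↦ b (χ g))
      = ∑ χ, charIdempotent φ ρ χ * φ (χ g) :=
        (glueAlgHom_apply ..).trans <| Finset.sum_congr rfl fun χ _ ↦ congrArg _ (hb (χ g))
    _ = ∑ χ, ρ g * charIdempotent φ ρ χ := Finset.sum_congr rfl fun χ _ ↦ by
        rw [apply_mul_charIdempotent hφρ, (commute_charIdempotent hφρ (χ g) χ).eq]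
    _ = ρ g := by rw [← Finset.mul_sum, sum_charIdempotent, mul_one]

lemma commute_charIdempotent_of_antilinear {t : A} (htρ : ∀ g, t * ρ g = ρ (-g) * t)
    (hφt : ∀ z, φ z * t = t * φ (starRingEnd ℂ z)) (χ : AddChar G ℂ) :
    Commute t (charIdempotent φ ρ χ) := by
  rw [Commute, SemiconjBy, charIdempotent, Finset.mul_sum, Finset.sum_mul]
  refine Fintype.sum_equiv (Equiv.neg G) _ _ fun g ↦ ?_
  have conj_coeff : starRingEnd ℂ ((Fintype.card G : ℂ)⁻¹ * χ (- -g)) =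
      (Fintype.card G : ℂ)⁻¹ * χ (-g) := by
    rw [neg_neg, AddChar.map_neg_eq_conj, map_mul, map_inv₀, map_natCast]
  rw [Equiv.neg_apply, mul_assoc, ← htρ, ← mul_assoc, ← mul_assoc, hφt, conj_coeff]

end CharIdempotent

section Quaternion

lemma commute_liftHom {R A : Type*} [CommRing R] [Ring A] [Algebra R A] {c₁ c₂ c₃ : R}
    (B : QuaternionAlgebra.Basis A c₁ c₂ c₃) {x : A} (hi : Commute x B.i) (hj : Commute x B.j)
    (q : ℍ[R,c₁,c₂,c₃]) : Commute x (B.liftHom q) := by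
  have hk : Commute x B.k := B.i_mul_j ▸ hi.mul_right hj
  have hq : B.liftHom q ∈ Algebra.adjoin R {B.i, B.j, B.k} := B.range_liftHom ▸ ⟨q, rfl⟩
  refine Algebra.commute_of_mem_adjoin_of_forall_mem_commute hq ?_
  rintro _ (rfl | rfl | rfl)
  exacts [hi, hj, hk]

variable {A : Type*} [Ring A] [Algebra ℝ A]

/-- The quaternionic basis `φ I, t, φ I * t` given by an antilinear square root `t` of `-1`. -/
noncomputable def antilinearBasis (φ : ℂ →ₐ[ℝ] A) (t : A) (ht : t * t = -1)
    (hφt : ∀ z, φ z * t = t * φ (starRingEnd ℂ z)) :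
    QuaternionAlgebra.Basis A (-1 : ℝ) 0 (-1) where
  i := φ Complex.I
  j := t
  k := φ Complex.I * t
  i_mul_i := by simp [← map_mul]
  j_mul_j := by simp [ht]
  i_mul_j := rfl
  j_mul_i := by simp [hφt]

variable {φ : ℂ →ₐ[ℝ] A} {t : A} (ht : t * t = -1)
  (hφt : ∀ z, φ z * t = t * φ (starRingEnd ℂ z))

lemma liftHom_antilinearBasis_comp_ofComplex :
    (antilinearBasis φ t ht hφt).liftHom.comp Quaternion.ofComplex = φ := by
  apply Complex.algHom_ext
  change (antilinearBasis φ t ht hφt).lift (Quaternion.ofComplex Complex.I) = φ Complex.I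
  simp [QuaternionAlgebra.Basis.lift, antilinearBasis]

lemma apply_mem_range_liftHom_antilinearBasis (z : ℂ) :
    φ z ∈ (antilinearBasis φ t ht hφt).liftHom.range :=
  ⟨Quaternion.ofComplex z, DFunLike.congr_fun (liftHom_antilinearBasis_comp_ofComplex ht hφt) z⟩

lemma mem_range_liftHom_antilinearBasis : t ∈ (antilinearBasis φ t ht hφt).liftHom.range := by
  rw [QuaternionAlgebra.Basis.range_liftHom]
  exact Algebra.subset_adjoin (by simp [antilinearBasis])

end Quaternion

theorem twisted_group_algebra_S3T_iso_general {G A : Type*} [AddCommGroup G] [Fintype G]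
    [Ring A] [Algebra ℝ A] (φ : ℂ →ₐ[ℝ] A) (ρ : AddChar G A) (t : A)
    (ht : t * t = -1) (htρ : ∀ g, t * ρ g = ρ (-g) * t)
    (hφρ : ∀ z g, Commute (φ z) (ρ g))
    (hφt : ∀ z, φ z * t = t * φ (starRingEnd ℂ z))
    (hinj : Function.Injective fun z : G → ℂ ↦ ∑ g, φ (z g) * ρ g)
    (hgen : Algebra.adjoin ℝ (Set.range φ ∪ Set.range ρ ∪ {t}) = ⊤) :
    Nonempty (A ≃ₐ[ℝ] (AddChar G ℂ → ℍ[ℝ])) := by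
  let B := antilinearBasis φ t ht hφt
  have he := completeOrthogonalIdempotents_charIdempotent (φ := (φ : ℂ →+* A)) hφρ
  have hcomm (χ : AddChar G ℂ) (q : ℍ[ℝ]) : Commute (charIdempotent φ ρ χ) (B.liftHom q) :=
    commute_liftHom B (commute_charIdempotent hφρ Complex.I χ).symm
      (commute_charIdempotent_of_antilinear htρ hφt χ).symm q
  let F := glueAlgHom he B.liftHom hcomm
  have hF_inj : Function.Injective F :=
    glueAlgHom_injective (B := ℍ[ℝ]) he B.liftHom hcomm (charIdempotent_ne_zero _ ρ hinj)
  have range_le : B.liftHom.range ≤ F.range := range_le_range_glueAlgHom he B.liftHom hcomm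
  have hF_range : F.range = ⊤ := by
    rw [eq_top_iff, ← hgen, Algebra.adjoin_le_iff]
    rintro _ ((⟨z, rfl⟩ | ⟨g, rfl⟩) | rfl)
    · exact range_le (apply_mem_range_liftHom_antilinearBasis ht hφt z)
    · exact apply_mem_range_glueAlgHom hφρ B.liftHom hcomm
        (apply_mem_range_liftHom_antilinearBasis ht hφt) g
    · exact range_le (mem_range_liftHom_antilinearBasis ht hφt)
  exact ⟨(AlgEquiv.ofBijective F ⟨hF_inj, (AlgHom.range_eq_top F).1 hF_range⟩).symm⟩

section ZMod

variable {M : Type*} [Monoid M] {n : ℕ} [NeZero n]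

/-- The representation `k ↦ r ^ k` of `ZMod n` given by an `n`-torsion element `r`; this is
`AddChar.zmodChar` for a monoid that need not be commutative. -/
def zmodPowers (r : M) (hr : r ^ n = 1) : AddChar (ZMod n) M where
  toFun k := r ^ k.val
  map_zero_eq_one' := by rw [ZMod.val_zero, pow_zero]
  map_add_eq_mul' k l := by rw [ZMod.val_add, ← pow_eq_pow_mod _ hr, pow_add]

lemma semiconjBy_apply_neg (ρ : AddChar (ZMod n) M) {t : M}
    (h : SemiconjBy t (ρ 1) (ρ (-1))) (k : ZMod n) : SemiconjBy t (ρ k) (ρ (-k)) := by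
  have hpow := h.pow_right k.val
  rwa [← AddChar.map_nsmul_eq_pow, ← AddChar.map_nsmul_eq_pow, nsmul_eq_mul, nsmul_eq_mul,
    ZMod.natCast_rightInverse, mul_one, mul_neg_one] at hpow

end ZMod

/-- A function algebra on three points is a threefold product; the points are numbered by
choice. -/
noncomputable def piAlgEquivProdOfCardEqThree (R S : Type*) {ι : Type*} [CommSemiring R]
    [Semiring S] [Algebra R S] [Fintype ι] (hι : Fintype.card ι = 3) :
    (ι → S) ≃ₐ[R] S × S × S :=
  let points : ι ≃ Unit ⊕ Unit ⊕ Unit := Fintype.equivOfCardEq (by simp [hι])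
  (AlgEquiv.piCongrLeft' R (fun _ ↦ S) points).trans <|
    (AlgEquiv.sumArrowEquivProdArrow _ _ R S).trans <|
      (AlgEquiv.funUnique R _ S).prodCongr <|
        (AlgEquiv.sumArrowEquivProdArrow _ _ R S).trans <|
          (AlgEquiv.funUnique R _ S).prodCongr (AlgEquiv.funUnique R _ S)

section S3T

variable {A : Type*} [Ring A] [Algebra ℝ A]

/-- The element of `A` with coordinates `z` in the ordered basis `1, r, r², t, r t, r² t` of the
twisted group algebra over `ℂ`. -/
noncomputable def s3tCombination (φ : ℂ →ₐ[ℝ] A) (r t : A) (z : Fin 6 → ℂ) : A :=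
  φ (z 0) + φ (z 1) * r + φ (z 2) * r ^ 2 + φ (z 3) * t + φ (z 4) * r * t + φ (z 5) * r ^ 2 * t

variable {φ : ℂ →ₐ[ℝ] A} {r t : A}

lemma injective_sum_zmodPowers_of_injective_s3tCombination (hr : r ^ 3 = 1)
    (hinj : Function.Injective (s3tCombination φ r t)) :
    Function.Injective fun z : ZMod 3 → ℂ ↦ ∑ k, φ (z k) * zmodPowers r hr k := by
  have sum_eq (z : ZMod 3 → ℂ) :
      ∑ k, φ (z k) * zmodPowers r hr k = s3tCombination φ r t ![z 0, z 1, z 2, 0, 0, 0] :=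
    calc ∑ k, φ (z k) * zmodPowers r hr k
        = φ (z 0) * r ^ 0 + φ (z 1) * r ^ 1 + φ (z 2) * r ^ 2 := by
          exact Fin.sum_univ_three fun k : ZMod 3 ↦ φ (z k) * zmodPowers r hr k
      _ = s3tCombination φ r t ![z 0, z 1, z 2, 0, 0, 0] := by simp [s3tCombination]
  intro z w hzw
  simp only [sum_eq] at hzw
  have coords := hinj hzw
  funext k
  fin_cases k
  exacts [congrFun coords 0, congrFun coords 1, congrFun coords 2]

lemma adjoin_eq_top_of_surjective_s3tCombination (hr : r ^ 3 = 1)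
    (hsurj : Function.Surjective (s3tCombination φ r t)) :
    Algebra.adjoin ℝ (Set.range φ ∪ Set.range (zmodPowers r hr) ∪ {t}) = ⊤ := by
  set S := Algebra.adjoin ℝ (Set.range φ ∪ Set.range (zmodPowers r hr) ∪ {t})
  have hφ (z : ℂ) : φ z ∈ S := Algebra.subset_adjoin (.inl (.inl ⟨z, rfl⟩))
  have hr_mem : r ∈ S := Algebra.subset_adjoin (.inl (.inr ⟨1, pow_one r⟩))
  have ht_mem : t ∈ S := Algebra.subset_adjoin (.inr rfl)
  rw [eq_top_iff]
  rintro a -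
  obtain ⟨z, rfl⟩ := hsurj a
  unfold s3tCombination
  aesop

end S3T

/-- The twisted group algebra `ℂ[S₃ᵀ]^ψ` of the anti-linear group `S₃ᵀ = ℤ₃ ⋊ ℤ₂ᵀ`
decomposes as three copies of the quaternions: if `A` is an associative unital
`ℝ`-algebra containing `ℂ` (via `φ`) and elements `r, t` with `r³ = 1`, `t² = -1`,
`t * r = r² * t`, `φ z * r = r * φ z` and `φ z * t = t * φ (conj z)`, such that
`(z₀, …, z₅) ↦ φ z₀ + φ z₁ * r + φ z₂ * r² + φ z₃ * t + φ z₄ * r * t + φ z₅ * r² * t`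
is bijective, then `A ≃ₐ[ℝ] ℍ × ℍ × ℍ`. -/
theorem twisted_group_algebra_S3T_iso
    (A : Type*) [Ring A] [Algebra ℝ A]
    (φ : ℂ →ₐ[ℝ] A) (r t : A)
    (hr : r * r * r = 1) (ht : t * t = -1) (htr : t * r = r * r * t)
    (hcr : ∀ z : ℂ, φ z * r = r * φ z)
    (hct : ∀ z : ℂ, φ z * t = t * φ ((starRingEnd ℂ) z))
    (hbij : Function.Bijective (fun z : Fin 6 → ℂ =>
      φ (z 0) + φ (z 1) * r + φ (z 2) * r ^ 2 + φ (z 3) * t +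
        φ (z 4) * r * t + φ (z 5) * r ^ 2 * t)) :
    Nonempty (A ≃ₐ[ℝ] ℍ[ℝ] × ℍ[ℝ] × ℍ[ℝ]) := by
  have hr_pow : r ^ 3 = 1 := by rw [pow_three', hr]
  have ht_inv : SemiconjBy t (zmodPowers r hr_pow 1) (zmodPowers r hr_pow (-1)) := by
    change t * r ^ 1 = r ^ 2 * t
    rw [pow_one, sq, htr]
  obtain ⟨E⟩ := twisted_group_algebra_S3T_iso_general φ (zmodPowers r hr_pow) t ht
    (semiconjBy_apply_neg _ ht_inv) (fun z k ↦ Commute.pow_right (hcr z) k.val) hct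
    (injective_sum_zmodPowers_of_injective_s3tCombination hr_pow hbij.injective)
    (adjoin_eq_top_of_surjective_s3tCombination hr_pow hbij.surjective)
  have card_eq : Fintype.card (AddChar (ZMod 3) ℂ) = 3 := by rw [AddChar.card_eq, ZMod.card]
  exact ⟨E.trans (piAlgEquivProdOfCardEqThree ℝ ℍ[ℝ] card_eq)⟩
end

section
/- Let K be a group, s : K → ℤ/2 a group homomorphism, N a finite commutative group (written multiplicatively), and e₂ : K × K → N a function satisfying the 2-cocycle identity e₂(k₁, k₂) * e₂(k₁k₂, k₃) = e₂(k₂, k₃) * e₂(k₁, k₂k₃) for all k₁, k₂, k₃ ∈ K. Let N̂ denote the group of homomorphisms N → ℂˣ, let K act on N̂ by k ▷ γ = γ if s(k) = 0 and k ▷ γ = γ⁻¹ if s(k) ≠ 0, and let H = N̂ ⋊ K be the semidirect product for this action, with S : H → ℤ/2 the composition of the projection H → K with s. Then the function ω : H × H × H → ℂˣ defined by ω((γ₁, k₁), (γ₂, k₂), (γ₃, k₃)) = γ₁(e₂(k₂, k₃)) is a twisted 3-cocycle on H with respect to S. (This is the anomaly 3-cocycle in the paper's theorem that gauging a unitary central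 subgroup N of an anti-unitary group G^T yields the Morita-dual symmetry Vec^ω over N̂ ⋊ (G^T/N), where e₂ is the extension class of N → G^T → G^T/N.) -/
/-
The 3-cocycle is a cup product. On `H = N̂ ⋊ K` the projection `h ↦ h.left` is the tautological
crossed homomorphism `H → N̂`, and `e₂` pulls back along `H → K` to a 2-cocycle with values in `N`.
Since conjugation inverts roots of unity, the evaluation pairing `N̂ × N → ℂˣ` intertwines the
inversion action on `N̂` with the conjugation action on `ℂˣ`, so pairing the two cocycles produces
a twisted 3-cocycle.
-/

noncomputable section

/-- Complex conjugation on the group of units `ℂˣ`. -/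
def conjUnits : ℂˣ →* ℂˣ := Units.map (starRingEnd ℂ).toMonoidHom

/-- The twisted action of a group `H` on `ℂˣ` determined by a homomorphism
`S : H → ℤ/2`: elements with `S h = 0` act trivially and elements with `S h ≠ 0` act
by complex conjugation. -/
def tAct {H : Type*} [Group H] (S : H →* Multiplicative (ZMod 2)) (h : H) (z : ℂˣ) :
    ℂˣ :=
  if S h = 1 then z else conjUnits z

/-- A twisted 3-cocycle on `H` with respect to `S : H → ℤ/2`. -/
def IsTwisted3Cocycle {H : Type*} [Group H] (S : H →* Multiplicative (ZMod 2))
    (ω : H → H → H → ℂˣ) : Prop :=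
  ∀ g₁ g₂ g₃ g₄,
    tAct S g₁ (ω g₂ g₃ g₄) * ω g₁ (g₂ * g₃) g₄ * ω g₁ g₂ g₃ =
      ω (g₁ * g₂) g₃ g₄ * ω g₁ g₂ (g₃ * g₄)

variable (K N : Type*) [Group K] [CommGroup N]

/-- The action of `K` on the character group `N̂ = Hom(N, ℂˣ)` in which `k` acts
trivially if `s k = 0` and by inversion if `s k ≠ 0`. -/
def invAut (s : K →* Multiplicative (ZMod 2)) : K →* MulAut (N →* ℂˣ) where
  toFun k := if s k = 1 then 1 else MulEquiv.inv (N →* ℂˣ)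
  map_one' := by simp
  map_mul' k₁ k₂ := by
    have hmul : s (k₁ * k₂) = s k₁ * s k₂ := map_mul s k₁ k₂
    have hcases : ∀ a : Multiplicative (ZMod 2), a = 1 ∨ a = Multiplicative.ofAdd 1 := by
      decide
    have hne : (Multiplicative.ofAdd (1 : ZMod 2)) ≠ 1 := by decide
    have hprod : (Multiplicative.ofAdd (1 : ZMod 2)) * Multiplicative.ofAdd 1 = 1 := by
      decide
    have hinv : (MulEquiv.inv (N →* ℂˣ)) * (MulEquiv.inv (N →* ℂˣ)) = 1 := by
      ext γ n
      simp
    rcases hcases (s k₁) with h₁ | h₁ <;> rcases hcases (s k₂) with h₂ | h₂ <;>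
      simp [hmul, h₁, h₂, hne, hprod, hinv]

theorem conjUnits_eq_inv_of_isOfFinOrder {z : ℂˣ} (hz : IsOfFinOrder z) :
    conjUnits z = z⁻¹ := by
  have hnorm : ‖(z : ℂ)‖ = 1 := ((Units.coeHom ℂ).isOfFinOrder hz).norm_eq_one
  ext
  rw [Units.val_inv_eq_inv_val, Complex.inv_eq_conj hnorm]
  rfl

/- Evaluating the crossed homomorphism identity at values of `e` leaves room for elements of
infinite order in `A`: conjugation inverts a character value only if it has modulus one. -/
theorem isTwisted3Cocycle_of_crossedHom_of_cocycle {H A : Type*} [Group H] [MulOneClass A]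
    {S : H →* Multiplicative (ZMod 2)} {a : H → A →* ℂˣ} {e : H → H → A}
    (ha : ∀ g₁ g₂ g₃ g₄,
      a (g₁ * g₂) (e g₃ g₄) = a g₁ (e g₃ g₄) * tAct S g₁ (a g₂ (e g₃ g₄)))
    (he : ∀ g₁ g₂ g₃, e g₁ g₂ * e (g₁ * g₂) g₃ = e g₂ g₃ * e g₁ (g₂ * g₃)) :
    IsTwisted3Cocycle S (fun g₁ g₂ g₃ => a g₁ (e g₂ g₃)) := by
  intro g₁ g₂ g₃ g₄
  calc tAct S g₁ (a g₂ (e g₃ g₄)) * a g₁ (e (g₂ * g₃) g₄) * a g₁ (e g₂ g₃)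
      = tAct S g₁ (a g₂ (e g₃ g₄)) * a g₁ (e g₂ g₃ * e (g₂ * g₃) g₄) := by
        rw [map_mul, mul_assoc, mul_comm (a g₁ (e g₂ g₃))]
    _ = tAct S g₁ (a g₂ (e g₃ g₄)) * a g₁ (e g₃ g₄ * e g₂ (g₃ * g₄)) := by rw [he]
    _ = a g₁ (e g₃ g₄) * tAct S g₁ (a g₂ (e g₃ g₄)) * a g₁ (e g₂ (g₃ * g₄)) := by
        rw [map_mul, mul_left_comm, mul_assoc]
    _ = a (g₁ * g₂) (e g₃ g₄) * a g₁ (e g₂ (g₃ * g₄)) := by rw [ha]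

section

variable {K N}

theorem invAut_apply_apply_of_isOfFinOrder (s : K →* Multiplicative (ZMod 2)) (k : K)
    (γ : N →* ℂˣ) {n : N} (hn : IsOfFinOrder n) :
    invAut K N s k γ n = tAct s k (γ n) := by
  by_cases hk : s k = 1
  · simp [invAut, tAct, hk]
  · simp [invAut, tAct, hk, conjUnits_eq_inv_of_isOfFinOrder (γ.isOfFinOrder hn)]

theorem mul_left_apply_of_isOfFinOrder (s : K →* Multiplicative (ZMod 2))
    (h₁ h₂ : (N →* ℂˣ) ⋊[invAut K N s] K) {n : N} (hn : IsOfFinOrder n) :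
    (h₁ * h₂).left n =
      h₁.left n * tAct (s.comp SemidirectProduct.rightHom) h₁ (h₂.left n) := by
  rw [SemidirectProduct.mul_left, MonoidHom.mul_apply,
    invAut_apply_apply_of_isOfFinOrder s _ _ hn]
  rfl

theorem anomaly_is_twisted3Cocycle_general
    (s : K →* Multiplicative (ZMod 2)) (e₂ : K → K → N)
    (hfin : ∀ k₁ k₂, IsOfFinOrder (e₂ k₁ k₂))
    (hcocycle : ∀ k₁ k₂ k₃,
      e₂ k₁ k₂ * e₂ (k₁ * k₂) k₃ = e₂ k₂ k₃ * e₂ k₁ (k₂ * k₃)) :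
    IsTwisted3Cocycle
      (s.comp (SemidirectProduct.rightHom :
        (N →* ℂˣ) ⋊[invAut K N s] K →* K))
      (fun h₁ h₂ h₃ => h₁.left (e₂ h₂.right h₃.right)) := by
  have hpullback (h₁ h₂ h₃ : (N →* ℂˣ) ⋊[invAut K N s] K) :
      e₂ h₁.right h₂.right * e₂ (h₁ * h₂).right h₃.right =
        e₂ h₂.right h₃.right * e₂ h₁.right (h₂ * h₃).right := by
    simpa only [SemidirectProduct.mul_right] using hcocycle h₁.right h₂.right h₃.right
  exact isTwisted3Cocycle_of_crossedHom_of_cocycle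
    (a := SemidirectProduct.left) (e := fun h₁ h₂ => e₂ h₁.right h₂.right)
    (fun h₁ h₂ h₃ h₄ => mul_left_apply_of_isOfFinOrder s h₁ h₂ (hfin h₃.right h₄.right))
    hpullback

end

/-- **The anomaly 3-cocycle from gauging a unitary central subgroup.**  Let `K` be a
group with grading `s : K → ℤ/2`, `N` a finite commutative group, and `e₂` a 2-cocycle
of `K` valued in `N`.  On the semidirect product `H = N̂ ⋊ K` (with `K` acting on
characters by inversion via `s`), with grading `S` induced by `s`, the function
`ω((γ₁,k₁),(γ₂,k₂),(γ₃,k₃)) = γ₁(e₂(k₂,k₃))` is a twisted 3-cocycle. -/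
theorem anomaly_is_twisted3Cocycle [Finite N]
    (s : K →* Multiplicative (ZMod 2)) (e₂ : K → K → N)
    (hcocycle : ∀ k₁ k₂ k₃,
      e₂ k₁ k₂ * e₂ (k₁ * k₂) k₃ = e₂ k₂ k₃ * e₂ k₁ (k₂ * k₃)) :
    IsTwisted3Cocycle
      (s.comp (SemidirectProduct.rightHom :
        (N →* ℂˣ) ⋊[invAut K N s] K →* K))
      (fun h₁ h₂ h₃ => h₁.left (e₂ h₂.right h₃.right)) :=
  anomaly_is_twisted3Cocycle_general s e₂ (fun _ _ => isOfFinOrder_of_finite _) hcocycle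

end
end

section
/- Let A be a finite commutative group, V a nonzero finite-dimensional complex vector space, ρ : A → (V ≃ₗ[ℂ] V) a group homomorphism, and T a conjugate-linear map on V with T(T(v)) = v for all v ∈ V and T ∘ ρ(a) = ρ(a) ∘ T for all a ∈ A. Assume the triple (V, ρ, T) is irreducible: the only ℂ-linear subspaces W ⊆ V with T(W) ⊆ W and ρ(a)(W) ⊆ W for all a ∈ A are 0 and V. Then dim_ℂ V ≤ 2. (This is the structural content of the paper's classification of simple objects of Rep(A × ℤ₂ᵀ): the one-dimensional real-type objects F_γ with γ² = 1 and the two-dimensional complex-type objects E_γ = γ ⊕ γ⁻¹ with γ² ≠ 1.) -/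
/-!
Commuting endomorphisms over an algebraically closed field have a common eigenvector: a simple
module over the commutative algebra they generate is one-dimensional. If `T` is `σ`-semilinear with
`σ² = 1` and commutes with them, then `T²` is linear and may be added to the commuting family, so
that there is a common eigenvector `v` of the family and of `T²`. Commuting with `T` turns the
character `χ` of `v` into the character `σ ∘ χ` of `T v`, hence the span of `v` and `T v` is
invariant, and by irreducibility it is the whole space.
-/

open Module Submodule

section CommonEigenvector

variable {K V : Type*} [Field K] [IsAlgClosed K] [AddCommGroup V] [Module K V]
  [FiniteDimensional K V] [Nontrivial V]

theorem exists_ne_zero_forall_smul_mem_span_singleton (R : Type*) [Ring R] [IsMulCommutative R]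
    [Algebra K R] [Module R V] [IsScalarTower K R V] :
    ∃ v : V, v ≠ 0 ∧ ∀ r : R, r • v ∈ K ∙ v := by
  have : IsArtinian R V := isArtinian_of_tower K inferInstance
  obtain ⟨W, hW⟩ := IsAtomic.exists_atom (Submodule R V)
  have : IsSimpleModule R W := isSimpleModule_iff_isAtom.2 hW
  have : FiniteDimensional K W := inferInstanceAs (FiniteDimensional K (W.restrictScalars K))
  have hdim : finrank K W = 1 := IsSimpleModule.finrank_eq_one_of_isMulCommutative R W K
  obtain ⟨v, hv, hspan⟩ := finrank_eq_one_iff'.1 hdim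
  refine ⟨v, by simpa using hv, fun r ↦ mem_span_singleton.2 ?_⟩
  obtain ⟨c, hc⟩ := hspan (r • v)
  exact ⟨c, congrArg Subtype.val hc⟩

theorem exists_ne_zero_forall_apply_eq_smul_of_pairwise_commute {S : Set (End K V)}
    (hS : S.Pairwise Commute) :
    ∃ v : V, v ≠ 0 ∧ ∀ f ∈ S, ∃ μ : K, f v = μ • v := by
  have : IsMulCommutative (Algebra.adjoin K S) :=
    Algebra.isMulCommutative_adjoin K (Set.pairwise_iff_of_refl (r := Commute) |>.1 hS)
  obtain ⟨v, hv, h⟩ := exists_ne_zero_forall_smul_mem_span_singleton (K := K) (V := V)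
    (Algebra.adjoin K S)
  refine ⟨v, hv, fun f hf ↦ ?_⟩
  obtain ⟨μ, hμ⟩ := mem_span_singleton.1 (h ⟨f, Algebra.subset_adjoin hf⟩)
  exact ⟨μ, hμ.symm⟩

end CommonEigenvector

theorem finrank_span_pair_le_two {K V : Type*} [Semiring K] [StrongRankCondition K]
    [AddCommMonoid V] [Module K V] (v w : V) : finrank K (span K {v, w}) ≤ 2 := by
  classical
  rw [← Finset.coe_pair]
  exact (finrank_span_finset_le_card {v, w}).trans Finset.card_le_two

section SpanPair

variable {K V : Type*} [Semiring K] [AddCommMonoid V] [Module K V]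
  {σ : K →+* K} {T : V →ₛₗ[σ] V} {v : V}

theorem span_pair_apply_le_comap_semilinear (h : T (T v) ∈ span K {v, T v}) :
    span K {v, T v} ≤ (span K {v, T v}).comap T :=
  span_le.2 (Set.pair_subset (mem_span_of_mem (by simp)) h)

theorem span_pair_apply_le_comap_of_apply_eq_smul {f : End K V} {μ : K}
    (hTf : T (f v) = f (T v)) (hv : f v = μ • v) :
    span K {v, T v} ≤ (span K {v, T v}).comap f := by
  have hTv : f (T v) = σ μ • T v := by rw [← hTf, hv, map_smulₛₗ]
  refine span_le.2 (Set.pair_subset ?_ ?_)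
  · simpa [hv] using smul_mem _ μ (mem_span_of_mem (by simp))
  · simpa [hTv] using smul_mem _ (σ μ) (mem_span_of_mem (by simp))

end SpanPair

theorem irreducible_rep_A_times_Z2T_dim_le_two_general
    {K V : Type*} [Field K] [IsAlgClosed K] [AddCommGroup V] [Module K V]
    [FiniteDimensional K V] [Nontrivial V] {σ : K →+* K} [RingHomInvPair σ σ]
    {S : Set (End K V)} (hS : S.Pairwise Commute)
    (T : V →ₛₗ[σ] V) (hTS : ∀ f ∈ S, ∀ v, T (f v) = f (T v))
    (hirr : ∀ W : Submodule K V,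
      (∀ v ∈ W, T v ∈ W) → (∀ f ∈ S, ∀ v ∈ W, f v ∈ W) → W = ⊥ ∨ W = ⊤) :
    finrank K V ≤ 2 := by
  let Tsq : End K V := T.comp T
  have hcomm : (insert Tsq S).Pairwise Commute :=
    hS.insert_of_symm fun f hf _ ↦ LinearMap.ext fun v ↦ by simp [Tsq, hTS f hf]
  obtain ⟨v, hv, heig⟩ := exists_ne_zero_forall_apply_eq_smul_of_pairwise_commute hcomm
  obtain ⟨c, hc⟩ : ∃ c : K, T (T v) = c • v := heig Tsq (Set.mem_insert _ _)
  have hvW : v ∈ span K {v, T v} := mem_span_of_mem (by simp)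
  have hT : span K {v, T v} ≤ (span K {v, T v}).comap T :=
    span_pair_apply_le_comap_semilinear (hc ▸ smul_mem _ c hvW)
  have hf : ∀ f ∈ S, span K {v, T v} ≤ (span K {v, T v}).comap f := fun f hf ↦
    have ⟨_, hμ⟩ := heig f (Set.mem_insert_of_mem _ hf)
    span_pair_apply_le_comap_of_apply_eq_smul (hTS f hf v) hμ
  have htop : span K {v, T v} = ⊤ :=
    (hirr _ hT hf).resolve_left ((Submodule.ne_bot_iff _).2 ⟨v, hvW, hv⟩)
  rw [← finrank_top, ← htop]
  exact finrank_span_pair_le_two v (T v)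

/-- An irreducible representation of `A × ℤ₂ᵀ` (a finite abelian group `A` acting
linearly, together with a commuting conjugate-linear involution `T`) on a nonzero
finite-dimensional complex vector space has complex dimension at most 2. -/
theorem irreducible_rep_A_times_Z2T_dim_le_two
    (A : Type*) [CommGroup A] [Finite A]
    (V : Type*) [AddCommGroup V] [Module ℂ V] [FiniteDimensional ℂ V] [Nontrivial V]
    (ρ : A →* (V ≃ₗ[ℂ] V))
    (T : V →ₛₗ[starRingEnd ℂ] V)
    (hT : ∀ v, T (T v) = v)
    (hTρ : ∀ (a : A) (v : V), T (ρ a v) = ρ a (T v))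
    (hirr : ∀ W : Submodule ℂ V,
      (∀ v ∈ W, T v ∈ W) → (∀ (a : A), ∀ v ∈ W, ρ a v ∈ W) → W = ⊥ ∨ W = ⊤) :
    Module.finrank ℂ V ≤ 2 := by
  refine irreducible_rep_A_times_Z2T_dim_le_two_general (S := Set.range fun a ↦ (ρ a : End ℂ V))
    ?_ T (Set.forall_mem_range.2 hTρ) fun W hW hρ ↦ hirr W hW (Set.forall_mem_range.1 hρ)
  rintro _ ⟨a, rfl⟩ _ ⟨b, rfl⟩ -
  exact LinearMap.ext fun v ↦ by simp [← LinearEquiv.mul_apply, ← map_mul, mul_comm]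
end

section
/- Let R : ℝ × ℝ → ℝ × ℝ be the ℝ-linear rotation by angle 2π/3, namely R(x, y) = (-(1/2)x - (√3/2)y, (√3/2)x - (1/2)y), which satisfies R ∘ R ∘ R = id. Then there exists an ℝ-linear isomorphism f : (ℝ × ℝ) ⊗[ℝ] (ℝ × ℝ) ≅ ℝ × ℝ × (ℝ × ℝ) intertwining the actions: f ∘ (R ⊗ R) = g ∘ f, where g(u, v, w) = (u, v, R(w)). (This is the fusion rule Q ⊗ Q = 2·𝟙 ⊕ Q for the nontrivial simple object Q of the ℝ-real fusion category Rep_ℝ(ℤ₃) = Rep(ℤ₃ × ℤ₂ᵀ), showing a non-invertible simple object for an abelian anti-linear group.) -/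
open TensorProduct

noncomputable section

/-- The rotation of `ℝ × ℝ` by angle `2π/3`:
`R(x, y) = (-(1/2)x - (√3/2)y, (√3/2)x - (1/2)y)`. -/
def Rrot : (ℝ × ℝ) →ₗ[ℝ] (ℝ × ℝ) where
  toFun p := (-(1 / 2) * p.1 - Real.sqrt 3 / 2 * p.2,
    Real.sqrt 3 / 2 * p.1 - 1 / 2 * p.2)
  map_add' := by
    intro a b
    simp only [Prod.fst_add, Prod.snd_add, Prod.mk_add_mk, Prod.mk.injEq]
    constructor <;> ring
  map_smul' := by
    intro c p
    simp only [Prod.smul_fst, Prod.smul_snd, Prod.smul_mk, smul_eq_mul,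
      RingHom.id_apply, Prod.mk.injEq]
    constructor <;> ring

/-!
Identify `ℝ × ℝ` with `ℂ`, so that `R` becomes multiplication by `ω = exp (2πi/3)` and `R ⊗ R`
becomes multiplication by `ω ⊗ ω` in the algebra `ℂ ⊗[ℝ] ℂ`. The algebra homomorphism
`z ⊗ w ↦ (z * conj w, conj (z * w))` is an isomorphism `ℂ ⊗[ℝ] ℂ ≃ ℂ × ℂ`, and it sends `ω ⊗ ω` to
`(1, ω)` since `conj ω = ω⁻¹` and `ω ^ 3 = 1`. Hence `R ⊗ R` fixes the first factor `ℂ = ℝ ⊕ ℝ` and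
acts as `R` on the second.
-/

open Complex ComplexConjugate

section Transport

variable {S A B M N : Type*} [CommSemiring S] [Semiring A] [Algebra S A] [Semiring B] [Algebra S B]
  [AddCommMonoid M] [Module S M] [AddCommMonoid N] [Module S N]

lemma congr_symm_map_eq_tmul_mul (e : A ≃ₗ[S] M) (e' : B ≃ₗ[S] N) {T : M →ₗ[S] M} {T' : N →ₗ[S] N}
    {a : A} {b : B} (hT : ∀ x, T (e x) = e (a * x)) (hT' : ∀ y, T' (e' y) = e' (b * y))
    (t : M ⊗[S] N) :
    TensorProduct.congr e.symm e'.symm (TensorProduct.map T T' t) =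
      a ⊗ₜ[S] b * TensorProduct.congr e.symm e'.symm t := by
  induction t with
  | zero => simp only [map_zero, mul_zero]
  | add s t hs ht => simp only [map_add, mul_add, hs, ht]
  | tmul m n =>
    obtain ⟨x, rfl⟩ := e.surjective m
    obtain ⟨y, rfl⟩ := e'.surjective n
    simp only [TensorProduct.map_tmul, TensorProduct.congr_tmul, hT, hT',
      LinearEquiv.symm_apply_apply, Algebra.TensorProduct.tmul_mul_tmul]

end Transport

/-- The algebra homomorphism `z ⊗ w ↦ (z * conj w, conj (z * w))`. The second component is
conjugated so that `ω ⊗ ω` acts on it as `ω`, rather than `ω⁻¹`, when `ω ^ 3 = 1`. -/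
def complexTensorToProd : ℂ ⊗[ℝ] ℂ →ₐ[ℝ] ℂ × ℂ :=
  (Algebra.TensorProduct.productMap (AlgHom.id ℝ ℂ) conjAe).prod
    (Algebra.TensorProduct.productMap conjAe conjAe)

lemma complexTensorToProd_tmul (z w : ℂ) :
    complexTensorToProd (z ⊗ₜ w) = (z * conj w, conj z * conj w) := rfl

lemma complexTensorToProd_surjective : Function.Surjective complexTensorToProd := by
  rintro ⟨a, b⟩
  -- `(1 ⊗ 1 ± I ⊗ I) / 2` are the idempotents mapped to `(1, 0)` and `(0, 1)`.
  refine ⟨((a + conj b) / 2) ⊗ₜ 1 + (I * (a - conj b) / 2) ⊗ₜ I, ?_⟩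
  simp only [map_add, complexTensorToProd_tmul, map_div₀, map_sub, map_mul, map_one, map_ofNat,
    conj_conj, conj_I, Prod.mk_add_mk, Prod.mk.injEq]
  constructor
  · linear_combination (-(a - conj b) / 2) * I_mul_I
  · linear_combination ((conj a - b) / 2) * I_mul_I

lemma complexTensorToProd_bijective : Function.Bijective complexTensorToProd := by
  have finrank_eq : Module.finrank ℝ (ℂ ⊗[ℝ] ℂ) = Module.finrank ℝ (ℂ × ℂ) := by
    simp [Module.finrank_tensorProduct, Module.finrank_prod]
  exact ⟨(LinearMap.injective_iff_surjective_of_finrank_eq_finrank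
    (f := complexTensorToProd.toLinearMap) finrank_eq).mpr complexTensorToProd_surjective,
    complexTensorToProd_surjective⟩

/-- The isomorphism of real algebras `ℂ ⊗[ℝ] ℂ ≃ ℂ × ℂ` given by `complexTensorToProd`. -/
def complexTensorEquivProd : ℂ ⊗[ℝ] ℂ ≃ₐ[ℝ] ℂ × ℂ :=
  AlgEquiv.ofBijective complexTensorToProd complexTensorToProd_bijective

lemma complexTensorEquivProd_tmul_self {ω : ℂ} (hω : ω ^ 3 = 1) :
    complexTensorEquivProd (ω ⊗ₜ ω) = (1, ω) := by
  have norm_ω : ‖ω‖ = 1 := norm_eq_one_of_pow_eq_one hω three_ne_zero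
  have conj_ω : conj ω = ω ^ 2 := by
    rw [← inv_eq_conj norm_ω]
    exact inv_eq_of_mul_eq_one_right (by rw [← pow_succ', hω])
  calc complexTensorEquivProd (ω ⊗ₜ ω)
      = (ω * conj ω, conj ω * conj ω) := complexTensorToProd_tmul ω ω
    _ = (ω ^ 3, ω ^ 3 * ω) := by rw [conj_ω]; ring_nf
    _ = (1, ω) := by rw [hω, one_mul]

/-- The primitive cube root of unity `exp (2πi/3)`, by which `Rrot` multiplies when `ℝ × ℝ` is
identified with `ℂ`. -/
def rotationRoot : ℂ := exp (2 * Real.pi * I / 3)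

lemma rotationRoot_pow_three : rotationRoot ^ 3 = 1 := by
  rw [rotationRoot]
  exact_mod_cast (isPrimitiveRoot_exp 3 three_ne_zero).pow_eq_one

lemma rotationRoot_eq : rotationRoot = ⟨-(1 / 2), √3 / 2⟩ := by
  have angle : (2 * Real.pi * I / 3 : ℂ) = ((Real.pi - Real.pi / 3 : ℝ) : ℂ) * I := by
    push_cast
    ring
  rw [rotationRoot, angle]
  apply Complex.ext
  · rw [exp_ofReal_mul_I_re, Real.cos_pi_sub, Real.cos_pi_div_three]
  · rw [exp_ofReal_mul_I_im, Real.sin_pi_sub, Real.sin_pi_div_three]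

lemma Rrot_equivRealProdLm (z : ℂ) :
    Rrot (equivRealProdLm z) = equivRealProdLm (rotationRoot * z) := by
  rw [rotationRoot_eq]
  ext
  · simp [Rrot]
  · simp only [Rrot, LinearMap.coe_mk, AddHom.coe_mk, equivRealProdLm_apply, mul_im]
    ring

lemma Rrot_Rrot_Rrot (p : ℝ × ℝ) : Rrot (Rrot (Rrot p)) = p := by
  obtain ⟨z, rfl⟩ := equivRealProdLm.surjective p
  simp only [Rrot_equivRealProdLm]
  rw [← mul_assoc, ← mul_assoc, ← pow_three', rotationRoot_pow_three, one_mul]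

/-- The fusion rule `Q ⊗ Q = 2·𝟙 ⊕ Q` for the 2-dimensional irreducible real
representation `Q = (ℝ × ℝ, R)` of `ℤ/3`: the rotation `R` by `2π/3` satisfies
`R ∘ R ∘ R = id`, and there is an `ℝ`-linear isomorphism
`(ℝ × ℝ) ⊗[ℝ] (ℝ × ℝ) ≅ ℝ × ℝ × (ℝ × ℝ)` intertwining `R ⊗ R` with
`(u, v, w) ↦ (u, v, R w)`. -/
theorem tensor_square_of_rotation_rep :
    (∀ p, Rrot (Rrot (Rrot p)) = p) ∧
    ∃ f : ((ℝ × ℝ) ⊗[ℝ] (ℝ × ℝ)) ≃ₗ[ℝ] (ℝ × ℝ × (ℝ × ℝ)),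
      ∀ t, f (TensorProduct.map Rrot Rrot t) =
        ((f t).1, (f t).2.1, Rrot (f t).2.2) := by
  refine ⟨Rrot_Rrot_Rrot, ?_⟩
  let toComplex : (ℝ × ℝ) ⊗[ℝ] (ℝ × ℝ) ≃ₗ[ℝ] ℂ ⊗[ℝ] ℂ :=
    TensorProduct.congr equivRealProdLm.symm equivRealProdLm.symm
  let ofComplex : (ℂ × ℂ) ≃ₗ[ℝ] ℝ × ℝ × (ℝ × ℝ) :=
    (equivRealProdLm.prodCongr equivRealProdLm).trans (LinearEquiv.prodAssoc ℝ ℝ ℝ (ℝ × ℝ))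
  refine ⟨(toComplex.trans complexTensorEquivProd.toLinearEquiv).trans ofComplex, fun t ↦ ?_⟩
  have toComplex_map : toComplex (TensorProduct.map Rrot Rrot t) =
      rotationRoot ⊗ₜ rotationRoot * toComplex t :=
    congr_symm_map_eq_tmul_mul _ _ Rrot_equivRealProdLm Rrot_equivRealProdLm t
  have ofComplex_apply (x : ℂ × ℂ) : ofComplex x =
      ((equivRealProdLm x.1).1, (equivRealProdLm x.1).2, equivRealProdLm x.2) := rfl
  have ofComplex_mul (x : ℂ × ℂ) : ofComplex ((1, rotationRoot) * x) =
      ((ofComplex x).1, (ofComplex x).2.1, Rrot (ofComplex x).2.2) := by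
    simp only [ofComplex_apply, Prod.fst_mul, Prod.snd_mul, one_mul, Rrot_equivRealProdLm]
  simp only [LinearEquiv.trans_apply, AlgEquiv.toLinearEquiv_apply, toComplex_map, map_mul,
    complexTensorEquivProd_tmul_self rotationRoot_pow_three, ofComplex_mul]

end
end
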